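/- Let k be a field, q ∈ k with q ≠ 0, and let R̂ be the 4×4 matrix over k (rows/columns indexed by pairs ordered 11,12,21,22) R̂ = [[q,0,0,0],[0,0,1,0],[0,1,q−q⁻¹,0],[0,0,0,q]]. Let A be an associative unital k-algebra and L a 2×2 matrix over A with entries l₁₁, l₁₂, l₂₁, l₂₂ satisfying the reflection equation R̂L₁R̂L₁ = L₁R̂L₁R̂, where L₁ = L ⊗ I₂. Then the quantum trace ℓ := q²·l₁₁ + l₂₂ is central among the generators: ℓ commutes with each of l₁₁, l₁₂, l₂₁, l₂₂ in A. -/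

import Mathlib

/-- The standard Hecke symmetry of `U_q(sl(2))` in braid form, as a matrix indexed by
pairs `(i,j)`, `i,j ∈ {0,1}`, ordered `(00,01,10,11)`:
`R̂ = [[q,0,0,0],[0,0,1,0],[0,1,q−q⁻¹,0],[0,0,0,q]]`. -/
def Rhat {k : Type*} [Field k] (q : k) : Matrix (Fin 2 × Fin 2) (Fin 2 × Fin 2) k :=
  Matrix.of fun p r =>
    if p.1 = p.2 ∧ r = p then q
    else if p = (0, 1) ∧ r = (1, 0) then 1
    else if p = (1, 0) ∧ r = (0, 1) then 1
    else if p = (1, 0) ∧ r = (1, 0) then q - q⁻¹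
    else 0

/-- if the `2×2` matrix `L = (l_i^j)` over `A` satisfies the reflection
equation `R̂L₁R̂L₁ = L₁R̂L₁R̂` (`L₁ = L ⊗ I₂`), then the quantum trace
`ℓ = q²·l₁₁ + l₂₂` commutes with every entry of `L`. -/
theorem stmt11 {k A : Type*} [Field k] [Ring A] [Algebra k A]
    (q : k) (hq : q ≠ 0)
    (L : Matrix (Fin 2) (Fin 2) A)
    (hRE : ((Rhat q).map (algebraMap k A)) *
        (Matrix.kroneckerMap (· * ·) L (1 : Matrix (Fin 2) (Fin 2) A)) *
        ((Rhat q).map (algebraMap k A)) *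
        (Matrix.kroneckerMap (· * ·) L (1 : Matrix (Fin 2) (Fin 2) A)) =
        (Matrix.kroneckerMap (· * ·) L (1 : Matrix (Fin 2) (Fin 2) A)) *
        ((Rhat q).map (algebraMap k A)) *
        (Matrix.kroneckerMap (· * ·) L (1 : Matrix (Fin 2) (Fin 2) A)) *
        ((Rhat q).map (algebraMap k A))) :
    ∀ i j : Fin 2,
      ((q ^ 2) • L 0 0 + L 1 1) * L i j = L i j * ((q ^ 2) • L 0 0 + L 1 1) := by
  have h01 := congrFun (congrFun hRE (0, 0)) (0, 1)
  have h10 := congrFun (congrFun hRE (0, 1)) (0, 0)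
  have h11 := congrFun (congrFun hRE (0, 1)) (0, 1)
  have h13 := congrFun (congrFun hRE (0, 1)) (1, 1)
  have h31 := congrFun (congrFun hRE (1, 1)) (0, 1)
  clear hRE
  simp [Matrix.mul_apply, Fintype.sum_prod_type, Rhat, Matrix.one_apply, ← map_sub, -map_inv₀,
    ← Algebra.smul_def, ← Algebra.commutes, smul_smul] at h01 h10 h11 h13 h31
  have e : q * (q - q⁻¹) = q ^ 2 - 1 := by field_simp
  have h01' := congrArg (fun x => q • x) h01
  have h10' := congrArg (fun x => q • x) h10
  simp only [smul_add, smul_smul, e, ← pow_two] at h01' h10' h13 h31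
  simp only [sub_smul, one_smul] at h01' h10'
  intro i j
  fin_cases i <;> fin_cases j <;>
    simp [add_mul, mul_add, h11]
  · rw [h01', h13]; abel
  · rw [← h10', ← h31]; abel
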